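/- Cut elimination for the basic justification logic J: if a J-formula is provable in the tableau system J^e_CS + (cut), then it is provable in J^e_CS. -/

import Mathlib

namespace JLTab

/-- Justification terms: variables, constants, application, sum,
verifier `!`, negative verifier `?`, weak negative verifier `?̄`. -/
inductive Term : Type
  | var : ℕ → Term
  | const : ℕ → Term
  | app : Term → Term → Term
  | sum : Term → Term → Term
  | bang : Term → Term
  | quest : Term → Term
  | qbar : Term → Term
  deriving DecidableEq

/-- JL-formulas: `A ::= p | ⊥ | ¬A | A → A | t:A`. -/
inductive Fml : Type
  | prop : ℕ → Fml
  | bot : Fml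
  | neg : Fml → Fml
  | imp : Fml → Fml → Fml
  | box : Term → Fml → Fml
  deriving DecidableEq

/-- A justification logic JL is J extended by any combination of jT, jD, j4, jB, j5. -/
structure Logic where
  hasT : Bool
  hasD : Bool
  has4 : Bool
  hasB : Bool
  has5 : Bool

/-- The basic justification logic J. -/
def Logic.J : Logic := ⟨false, false, false, false, false⟩

/-- The logic of proofs LP = JT4. -/
def Logic.LP : Logic := ⟨true, false, true, false, false⟩

/-- The logic JT45. -/
def Logic.JT45 : Logic := ⟨true, false, true, false, true⟩

/-- Propositional evaluation of a formula, treating propositional variables and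
formulas `t:A` as atoms. -/
def evalProp (v : Fml → Bool) : Fml → Bool
  | .prop n => v (.prop n)
  | .bot => false
  | .neg A => !(evalProp v A)
  | .imp A B => !(evalProp v A) || evalProp v B
  | .box t A => v (.box t A)

/-- A propositional tautology. -/
def IsTaut (A : Fml) : Prop := ∀ v : Fml → Bool, evalProp v A = true

/-- Axiom instances of the justification logic `L`. -/
inductive Axm (L : Logic) : Fml → Prop
  | taut {A} : IsTaut A → Axm L A
  | sumL {s t A} : Axm L (.imp (.box s A) (.box (.sum s t) A))
  | sumR {s t A} : Axm L (.imp (.box s A) (.box (.sum t s) A))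
  | jK {s t A B} :
      Axm L (.imp (.box s (.imp A B)) (.imp (.box t A) (.box (.app s t) B)))
  | jT {t A} : L.hasT = true → Axm L (.imp (.box t A) A)
  | jD {t} : L.hasD = true → Axm L (.imp (.box t .bot) .bot)
  | j4 {t A} : L.has4 = true → Axm L (.imp (.box t A) (.box (.bang t) (.box t A)))
  | jB {t A} : L.hasB = true →
      Axm L (.imp (.neg A) (.box (.qbar t) (.neg (.box t A))))
  | j5 {t A} : L.has5 = true →
      Axm L (.imp (.neg (.box t A)) (.box (.quest t) (.neg (.box t A))))

/-- Formulas of the form `c_{i_n} : ⋯ : c_{i_1} : A` (n ≥ 1) with `A` an axiom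
instance of `L`; exactly the formulas produced by Iterated Axiom Necessitation. -/
inductive IsIAN (L : Logic) : Fml → Prop
  | base {c A} : Axm L A → IsIAN L (.box (.const c) A)
  | step {c F} : IsIAN L F → IsIAN L (.box (.const c) F)

/-- A constant specification for `L`: a downward closed set of formulas of the
form `c_{i_n} : ⋯ : c_{i_1} : A` with `A` an axiom instance of `L`. -/
structure ConstSpec (L : Logic) where
  set : Set Fml
  mem_ian : ∀ F ∈ set, IsIAN L F
  downward : ∀ c F, Fml.box (Term.const c) F ∈ set → IsIAN L F → F ∈ set

/-- The Hilbert system JL_CS: axioms of `L`, Modus Ponens, and Iterated Axiom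
Necessitation restricted to the constant specification `cs`. -/
inductive Deriv (L : Logic) (cs : ConstSpec L) : Fml → Prop
  | axm {A} : Axm L A → Deriv L cs A
  | mp {A B} : Deriv L cs (.imp A B) → Deriv L cs A → Deriv L cs B
  | ian {F} : F ∈ cs.set → Deriv L cs F

/-- An M-model (Mkrtychev model): an admissible evidence function together with
a valuation of propositional variables. -/
structure MModel where
  ev : Term → Set Fml
  val : ℕ → Prop

/-- Truth in an M-model; `t:A` is true iff `A ∈ E(t)`. -/
def MModel.sat (M : MModel) : Fml → Prop
  | .prop n => M.val n
  | .bot => False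
  | .neg A => ¬ M.sat A
  | .imp A B => M.sat A → M.sat B
  | .box t A => A ∈ M.ev t

/-- `M` is an M-model for JL_CS: conditions E1–E3 always, and E4–E8 according to
the extra axioms of the logic `L`. -/
structure IsModel (L : Logic) (cs : ConstSpec L) (M : MModel) : Prop where
  e1 : ∀ s t A B, Fml.imp A B ∈ M.ev s → A ∈ M.ev t → B ∈ M.ev (.app s t)
  e2l : ∀ s t, M.ev s ⊆ M.ev (.sum s t)
  e2r : ∀ s t, M.ev t ⊆ M.ev (.sum s t)
  e3 : ∀ c F, Fml.box (.const c) F ∈ cs.set → F ∈ M.ev (.const c)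
  e4 : L.hasT = true → ∀ t A, A ∈ M.ev t → M.sat A
  e5 : L.hasD = true → ∀ t, Fml.bot ∉ M.ev t
  e6 : L.has4 = true → ∀ t A, A ∈ M.ev t → Fml.box t A ∈ M.ev (.bang t)
  e7 : L.hasB = true → ∀ t A, ¬ M.sat A → Fml.neg (.box t A) ∈ M.ev (.qbar t)
  e8 : L.has5 = true → ∀ t A, A ∉ M.ev t → Fml.neg (.box t A) ∈ M.ev (.quest t)

/-- `A` is JL_CS-valid: true in every M-model of JL_CS. -/
def Valid (L : Logic) (cs : ConstSpec L) (A : Fml) : Prop :=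
  ∀ M : MModel, IsModel L cs M → M.sat A

/-- `Subf A B`: `A` is a subformula of `B`. -/
inductive Subf : Fml → Fml → Prop
  | refl (A) : Subf A A
  | neg {A B} : Subf A B → Subf A (.neg B)
  | impL {A B C} : Subf A B → Subf A (.imp B C)
  | impR {A C B} : Subf A C → Subf A (.imp B C)
  | box {A B t} : Subf A B → Subf A (.box t B)

/-- `A` is a CS-subformula of the root set `R`: a subformula of a formula in
`R ∪ CS`. -/
def CSSub {L : Logic} (cs : ConstSpec L) (R : Set Fml) (A : Fml) : Prop :=
  (∃ B ∈ R, Subf A B) ∨ (∃ F ∈ cs.set, Subf A F)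

/-- `A` is a weak CS-subformula of the root set `R`: a subformula, or the
negation of a subformula, of a formula in `R ∪ CS`. -/
def WeakCSSub {L : Logic} (cs : ConstSpec L) (R : Set Fml) (A : Fml) : Prop :=
  CSSub cs R A ∨ ∃ C, A = Fml.neg C ∧ CSSub cs R C

/-- `SubTm u t`: `u` is a subterm of `t`. -/
inductive SubTm : Term → Term → Prop
  | refl (t) : SubTm t t
  | appL {u s t} : SubTm u s → SubTm u (.app s t)
  | appR {u s t} : SubTm u t → SubTm u (.app s t)
  | sumL {u s t} : SubTm u s → SubTm u (.sum s t)
  | sumR {u s t} : SubTm u t → SubTm u (.sum s t)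
  | bang {u t} : SubTm u t → SubTm u (.bang t)
  | quest {u t} : SubTm u t → SubTm u (.quest t)
  | qbar {u t} : SubTm u t → SubTm u (.qbar t)

/-- `OccT u A`: the term `u` occurs in the formula `A`. -/
inductive OccT (u : Term) : Fml → Prop
  | neg {A} : OccT u A → OccT u (.neg A)
  | impL {A B} : OccT u A → OccT u (.imp A B)
  | impR {A B} : OccT u B → OccT u (.imp A B)
  | boxT {t A} : SubTm u t → OccT u (.box t A)
  | boxF {t A} : OccT u A → OccT u (.box t A)

/-- The term `u` occurs in (some formula of) the root set `R`. -/
def OccRoot (R : Set Fml) (u : Term) : Prop := ∃ B ∈ R, OccT u B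

/-- Nodes of a tableau: JL-formulas `A`, and evidential formulas
`[t,A]` (`pos`) and `∼[t,A]` (`neg`). -/
inductive Node : Type
  | fml : Fml → Node
  | pos : Term → Fml → Node
  | neg : Term → Fml → Node
  deriving DecidableEq

/-- `TabN L cs pb cut R Γ n`: the branch `Γ` of a tableau with root set `R` has
a closed tableau continuation using `n` rule applications.  The flag `pb`
enables the analytic rules (PB), (PB_e); the flag `cut` enables the
unrestricted cut rules (cut_f), (cut_e).  The rules (e), (e_⊥), (!), (?̄), (?)
are enabled according to the extra axioms of the logic `L`.  Base cases are the
four branch-closure conditions. -/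
inductive TabN (L : Logic) (cs : ConstSpec L) (pb cut : Bool) (R : Set Fml) :
    Set Node → ℕ → Prop
  | closeF {Γ A} : Node.fml A ∈ Γ → Node.fml (.neg A) ∈ Γ → TabN L cs pb cut R Γ 0
  | closeE {Γ t A} : Node.pos t A ∈ Γ → Node.neg t A ∈ Γ → TabN L cs pb cut R Γ 0
  | closeBot {Γ} : Node.fml .bot ∈ Γ → TabN L cs pb cut R Γ 0
  | closeCS {Γ c F} : Fml.box (.const c) F ∈ cs.set →
      Node.fml (.neg (.box (.const c) F)) ∈ Γ → TabN L cs pb cut R Γ 0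
  | fNeg {Γ A n} : Node.fml (.neg (.neg A)) ∈ Γ →
      TabN L cs pb cut R (insert (Node.fml A) Γ) n → TabN L cs pb cut R Γ (n + 1)
  | fImp {Γ A B n} : Node.fml (.neg (.imp A B)) ∈ Γ →
      TabN L cs pb cut R (insert (Node.fml A) (insert (Node.fml (.neg B)) Γ)) n →
      TabN L cs pb cut R Γ (n + 1)
  | tImp {Γ A B m n} : Node.fml (.imp A B) ∈ Γ →
      TabN L cs pb cut R (insert (Node.fml (.neg A)) Γ) m →
      TabN L cs pb cut R (insert (Node.fml B) Γ) n →
      TabN L cs pb cut R Γ (m + n + 1)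
  | te {Γ t A n} : Node.fml (.box t A) ∈ Γ →
      TabN L cs pb cut R (insert (Node.pos t A) Γ) n → TabN L cs pb cut R Γ (n + 1)
  | fe {Γ t A n} : Node.fml (.neg (.box t A)) ∈ Γ →
      TabN L cs pb cut R (insert (Node.neg t A) Γ) n → TabN L cs pb cut R Γ (n + 1)
  | plusL {Γ t s A n} : Node.neg (.sum t s) A ∈ Γ →
      TabN L cs pb cut R (insert (Node.neg t A) Γ) n → TabN L cs pb cut R Γ (n + 1)
  | plusR {Γ t s A n} : Node.neg (.sum t s) A ∈ Γ →
      TabN L cs pb cut R (insert (Node.neg s A) Γ) n → TabN L cs pb cut R Γ (n + 1)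
  | appR {Γ s t A B n} : Node.pos s (.imp A B) ∈ Γ → Node.pos t A ∈ Γ →
      CSSub cs R (.imp A B) → OccRoot R (.app s t) →
      TabN L cs pb cut R (insert (Node.pos (.app s t) B) Γ) n →
      TabN L cs pb cut R Γ (n + 1)
  | rulePB {Γ A m n} : pb = true → CSSub cs R A →
      TabN L cs pb cut R (insert (Node.fml A) Γ) m →
      TabN L cs pb cut R (insert (Node.fml (.neg A)) Γ) n →
      TabN L cs pb cut R Γ (m + n + 1)
  | rulePBe {Γ t A m n} : pb = true → CSSub cs R A → OccRoot R t →
      TabN L cs pb cut R (insert (Node.pos t A) Γ) m →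
      TabN L cs pb cut R (insert (Node.neg t A) Γ) n →
      TabN L cs pb cut R Γ (m + n + 1)
  | cutF {Γ A m n} : cut = true →
      TabN L cs pb cut R (insert (Node.fml A) Γ) m →
      TabN L cs pb cut R (insert (Node.fml (.neg A)) Γ) n →
      TabN L cs pb cut R Γ (m + n + 1)
  | cutE {Γ t A m n} : cut = true →
      TabN L cs pb cut R (insert (Node.pos t A) Γ) m →
      TabN L cs pb cut R (insert (Node.neg t A) Γ) n →
      TabN L cs pb cut R Γ (m + n + 1)
  | ruleT {Γ t A n} : L.hasT = true → Node.pos t A ∈ Γ →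
      TabN L cs pb cut R (insert (Node.fml A) Γ) n → TabN L cs pb cut R Γ (n + 1)
  | ruleD {Γ t n} : L.hasD = true → Node.pos t .bot ∈ Γ →
      TabN L cs pb cut R (insert (Node.fml .bot) Γ) n → TabN L cs pb cut R Γ (n + 1)
  | rule4 {Γ t A n} : L.has4 = true → Node.neg (.bang t) (.box t A) ∈ Γ →
      TabN L cs pb cut R (insert (Node.neg t A) Γ) n → TabN L cs pb cut R Γ (n + 1)
  | ruleB {Γ t A n} : L.hasB = true → Node.neg (.qbar t) (.neg (.box t A)) ∈ Γ →
      TabN L cs pb cut R (insert (Node.fml A) Γ) n → TabN L cs pb cut R Γ (n + 1)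
  | rule5 {Γ t A n} : L.has5 = true → Node.neg (.quest t) (.neg (.box t A)) ∈ Γ →
      TabN L cs pb cut R (insert (Node.pos t A) Γ) n → TabN L cs pb cut R Γ (n + 1)

/-- There is a closed tableau below the branch `Γ` (root set `R`). -/
def Tab (L : Logic) (cs : ConstSpec L) (pb cut : Bool) (R : Set Fml)
    (Γ : Set Node) : Prop :=
  ∃ n, TabN L cs pb cut R Γ n

/-- A tableau proof of `A`: a closed tableau whose root is `¬A`. -/
def TabProof (L : Logic) (cs : ConstSpec L) (pb cut : Bool) (A : Fml) : Prop :=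
  Tab L cs pb cut {Fml.neg A} {Node.fml (Fml.neg A)}

/-- A single application of a JL^e_CS-tableau rule to the branch `Γ` (root set
`R`), producing the list of extended branches (one for a non-branching rule,
two for a branching rule). -/
inductive RuleApp (L : Logic) (cs : ConstSpec L) (R : Set Fml) (Γ : Set Node) :
    List (Set Node) → Prop
  | fNeg {A} : Node.fml (.neg (.neg A)) ∈ Γ →
      RuleApp L cs R Γ [insert (Node.fml A) Γ]
  | fImp {A B} : Node.fml (.neg (.imp A B)) ∈ Γ →
      RuleApp L cs R Γ [insert (Node.fml A) (insert (Node.fml (.neg B)) Γ)]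
  | tImp {A B} : Node.fml (.imp A B) ∈ Γ →
      RuleApp L cs R Γ [insert (Node.fml (.neg A)) Γ, insert (Node.fml B) Γ]
  | te {t A} : Node.fml (.box t A) ∈ Γ → RuleApp L cs R Γ [insert (Node.pos t A) Γ]
  | fe {t A} : Node.fml (.neg (.box t A)) ∈ Γ →
      RuleApp L cs R Γ [insert (Node.neg t A) Γ]
  | plusL {t s A} : Node.neg (.sum t s) A ∈ Γ →
      RuleApp L cs R Γ [insert (Node.neg t A) Γ]
  | plusR {t s A} : Node.neg (.sum t s) A ∈ Γ →
      RuleApp L cs R Γ [insert (Node.neg s A) Γ]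
  | appR {s t A B} : Node.pos s (.imp A B) ∈ Γ → Node.pos t A ∈ Γ →
      CSSub cs R (.imp A B) → OccRoot R (.app s t) →
      RuleApp L cs R Γ [insert (Node.pos (.app s t) B) Γ]
  | rulePB {A} : CSSub cs R A →
      RuleApp L cs R Γ [insert (Node.fml A) Γ, insert (Node.fml (.neg A)) Γ]
  | rulePBe {t A} : CSSub cs R A → OccRoot R t →
      RuleApp L cs R Γ [insert (Node.pos t A) Γ, insert (Node.neg t A) Γ]
  | ruleT {t A} : L.hasT = true → Node.pos t A ∈ Γ →
      RuleApp L cs R Γ [insert (Node.fml A) Γ]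
  | ruleD {t} : L.hasD = true → Node.pos t .bot ∈ Γ →
      RuleApp L cs R Γ [insert (Node.fml .bot) Γ]
  | rule4 {t A} : L.has4 = true → Node.neg (.bang t) (.box t A) ∈ Γ →
      RuleApp L cs R Γ [insert (Node.neg t A) Γ]
  | ruleB {t A} : L.hasB = true → Node.neg (.qbar t) (.neg (.box t A)) ∈ Γ →
      RuleApp L cs R Γ [insert (Node.fml A) Γ]
  | rule5 {t A} : L.has5 = true → Node.neg (.quest t) (.neg (.box t A)) ∈ Γ →
      RuleApp L cs R Γ [insert (Node.pos t A) Γ]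

/-- Satisfaction of tableau nodes in an M-model: `M` satisfies `[t,A]` iff
`A ∈ E(t)`, and satisfies `∼[t,A]` iff `A ∉ E(t)`. -/
def NodeSat (M : MModel) : Node → Prop
  | .fml A => M.sat A
  | .pos t A => A ∈ M.ev t
  | .neg t A => A ∉ M.ev t

/-- Branches reachable from the initial branch by tableau rule applications. -/
inductive Reach (L : Logic) (cs : ConstSpec L) (R : Set Fml) :
    Set Node → Set Node → Prop
  | refl (Γ) : Reach L cs R Γ Γ
  | step {Γ Γ' Γ'' exts} : Reach L cs R Γ Γ' → RuleApp L cs R Γ' exts →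
      Γ'' ∈ exts → Reach L cs R Γ Γ''

/-- One non-redundant tableau construction step: a rule application properly
extending the branch. -/
def Step (L : Logic) (cs : ConstSpec L) (R : Set Fml) (Γ Γ' : Set Node) : Prop :=
  ∃ exts, RuleApp L cs R Γ exts ∧ Γ' ∈ exts ∧ Γ ⊂ Γ'

/-- The term is in the language of the logic `L` (which contains those
operations occurring in the axioms of `L`). -/
def TermInLang (L : Logic) : Term → Prop
  | .var _ => True
  | .const _ => True
  | .app s t => TermInLang L s ∧ TermInLang L t
  | .sum s t => TermInLang L s ∧ TermInLang L t
  | .bang t => L.has4 = true ∧ TermInLang L t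
  | .quest t => L.has5 = true ∧ TermInLang L t
  | .qbar t => L.hasB = true ∧ TermInLang L t

/-- The formula is in the language of the logic `L`. -/
def FmlInLang (L : Logic) : Fml → Prop
  | .prop _ => True
  | .bot => True
  | .neg A => FmlInLang L A
  | .imp A B => FmlInLang L A ∧ FmlInLang L B
  | .box t A => TermInLang L t ∧ FmlInLang L A

/-- The initial branch of a tableau for a finite set `S` of formulas. -/
def branchOf (S : Finset Fml) : Set Node := Node.fml '' (↑S : Set Fml)

end JLTab

/-!
Cut is admissible because it is sound while the cut-free system is already complete for M-models.
A branch that cannot be closed extends, by Zorn's lemma, to a maximal one; since (PB) and (PB_e) are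
available, a maximal open branch decides enough to be a Hintikka set. Its model is generated
from the positive evidential formulas by the clauses of an admissible evidence function, and
may contain evidence for terms foreign to the root: truth is compared with membership
only for subformulas of the root, whose terms all occur in it.
-/

namespace JLTab

variable {L : Logic} {cs : ConstSpec L} {pb cut : Bool} {R : Set Fml} {Γ Δ : Set Node} {n : ℕ}

section Soundness

variable {M : MModel}

/-- The model `M` satisfies every node of the branch `Γ`. -/
def BranchSat (M : MModel) (Γ : Set Node) : Prop := ∀ x ∈ Γ, NodeSat M x

theorem BranchSat.insert {x : Node} (h : BranchSat M Γ) (hx : NodeSat M x) :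
    BranchSat M (insert x Γ) :=
  Set.forall_mem_insert.2 ⟨hx, h⟩

theorem TabN.not_branchSat (hM : IsModel L cs M) (d : TabN L cs pb cut R Γ n) :
    ¬ BranchSat M Γ := by
  intro h
  induction d with
  | closeF hA hnA => exact h _ hnA (h _ hA)
  | closeE hp hn => exact h _ hn (h _ hp)
  | closeBot hbot => exact h _ hbot
  | closeCS hF hn => exact h _ hn (hM.e3 _ _ hF)
  | fNeg hA _ ih => exact ih (h.insert (not_not.1 (h _ hA)))
  | fImp hAB _ ih =>
    have ⟨hA, hB⟩ := Classical.not_imp.1 (h _ hAB)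
    exact ih ((h.insert (x := .fml (.neg _)) hB).insert hA)
  | tImp hAB _ _ ihA ihB => exact ihA (h.insert fun hA => ihB (h.insert (h _ hAB hA)))
  | te hA _ ih =>
    have htA := h _ hA
    exact ih (h.insert (x := .pos _ _) htA)
  | fe hA _ ih =>
    have htA := h _ hA
    exact ih (h.insert (x := .neg _ _) htA)
  | plusL hn _ ih => exact ih (h.insert fun ht => h _ hn (hM.e2l _ _ ht))
  | plusR hn _ ih => exact ih (h.insert fun hs => h _ hn (hM.e2r _ _ hs))
  | appR hs ht _ _ _ ih => exact ih (h.insert (hM.e1 _ _ _ _ (h _ hs) (h _ ht)))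
  | rulePB _ _ _ _ ih₁ ih₂ => exact ih₂ (h.insert fun hA => ih₁ (h.insert hA))
  | rulePBe _ _ _ _ _ ih₁ ih₂ => exact ih₂ (h.insert fun hA => ih₁ (h.insert hA))
  | cutF _ _ _ ih₁ ih₂ => exact ih₂ (h.insert fun hA => ih₁ (h.insert hA))
  | cutE _ _ _ ih₁ ih₂ => exact ih₂ (h.insert fun hA => ih₁ (h.insert hA))
  | ruleT hT hp _ ih => exact ih (h.insert (hM.e4 hT _ _ (h _ hp)))
  | ruleD hD hp _ _ => exact hM.e5 hD _ (h _ hp)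
  | rule4 h4 hn _ ih => exact ih (h.insert fun ht => h _ hn (hM.e6 h4 _ _ ht))
  | ruleB hB hn _ ih => exact ih (h.insert (not_not.1 fun hA => h _ hn (hM.e7 hB _ _ hA)))
  | rule5 h5 hn _ ih => exact ih (h.insert (not_not.1 fun ht => h _ hn (hM.e8 h5 _ _ ht)))

end Soundness

section MaximalOpenBranches

theorem eventually_mem_insert {ι : Type*} {l : Filter ι} {S : ι → Set Node}
    (hS : ∀ x ∈ Γ, ∀ᶠ i in l, x ∈ S i) (y : Node) :
    ∀ x ∈ insert y Γ, ∀ᶠ i in l, x ∈ insert y (S i) := by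
  rintro x (rfl | hx)
  · exact .of_forall fun _ => Set.mem_insert _ _
  · exact (hS x hx).mono fun _ => Set.mem_insert_of_mem _

/-- A closed tableau uses only finitely many nodes of its branch. Stating this through a filter
yields both weakening and compactness along chains from one induction. -/
theorem TabN.eventually {ι : Type*} {l : Filter ι} {S : ι → Set Node}
    (d : TabN L cs pb cut R Γ n) (hS : ∀ x ∈ Γ, ∀ᶠ i in l, x ∈ S i) :
    ∀ᶠ i in l, TabN L cs pb cut R (S i) n := by
  have hins := @eventually_mem_insert
  induction d generalizing S with
  | closeF hA hnA => filter_upwards [hS _ hA, hS _ hnA] with i using .closeF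
  | closeE hp hn => filter_upwards [hS _ hp, hS _ hn] with i using .closeE
  | closeBot hbot => filter_upwards [hS _ hbot] with i using .closeBot
  | closeCS hF hn => filter_upwards [hS _ hn] with i using .closeCS hF
  | fNeg hA _ ih => filter_upwards [hS _ hA, ih (hins hS _)] with i using .fNeg
  | fImp hAB _ ih => filter_upwards [hS _ hAB, ih (hins (hins hS _) _)] with i using .fImp
  | tImp hAB _ _ ihA ihB =>
    filter_upwards [hS _ hAB, ihA (hins hS _), ihB (hins hS _)] with i using .tImp
  | te hA _ ih => filter_upwards [hS _ hA, ih (hins hS _)] with i using .te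
  | fe hA _ ih => filter_upwards [hS _ hA, ih (hins hS _)] with i using .fe
  | plusL hn _ ih => filter_upwards [hS _ hn, ih (hins hS _)] with i using .plusL
  | plusR hn _ ih => filter_upwards [hS _ hn, ih (hins hS _)] with i using .plusR
  | appR hs ht hAB hst _ ih =>
    filter_upwards [hS _ hs, hS _ ht, ih (hins hS _)] with i hs ht using .appR hs ht hAB hst
  | rulePB hpb hA _ _ ih₁ ih₂ =>
    filter_upwards [ih₁ (hins hS _), ih₂ (hins hS _)] with i using .rulePB hpb hA
  | rulePBe hpb hA ht _ _ ih₁ ih₂ =>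
    filter_upwards [ih₁ (hins hS _), ih₂ (hins hS _)] with i using .rulePBe hpb hA ht
  | cutF hcut _ _ ih₁ ih₂ =>
    filter_upwards [ih₁ (hins hS _), ih₂ (hins hS _)] with i using .cutF hcut
  | cutE hcut _ _ ih₁ ih₂ =>
    filter_upwards [ih₁ (hins hS _), ih₂ (hins hS _)] with i using .cutE hcut
  | ruleT hT hp _ ih => filter_upwards [hS _ hp, ih (hins hS _)] with i using .ruleT hT
  | ruleD hD hp _ ih => filter_upwards [hS _ hp, ih (hins hS _)] with i using .ruleD hD
  | rule4 h4 hn _ ih => filter_upwards [hS _ hn, ih (hins hS _)] with i using .rule4 h4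
  | ruleB hB hn _ ih => filter_upwards [hS _ hn, ih (hins hS _)] with i using .ruleB hB
  | rule5 h5 hn _ ih => filter_upwards [hS _ hn, ih (hins hS _)] with i using .rule5 h5

theorem TabN.mono (d : TabN L cs pb cut R Γ n) (h : Γ ⊆ Δ) : TabN L cs pb cut R Δ n :=
  Filter.eventually_pure.1 (d.eventually (l := pure ()) (S := fun _ => Δ) fun _ hx =>
    Filter.eventually_pure.2 (h hx))

theorem Tab.exists_mem_of_sUnion {c : Set (Set Node)} (hne : c.Nonempty)
    (hc : DirectedOn (· ≤ ·) c) (h : Tab L cs pb cut R (⋃₀ c)) :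
    ∃ Γ ∈ c, Tab L cs pb cut R Γ := by
  obtain ⟨n, d⟩ := h
  have := hne.to_subtype
  have := hc.isDirectedOrder
  have hmem : ∀ x ∈ ⋃₀ c, ∀ᶠ Γ : c in Filter.atTop, x ∈ (Γ : Set Node) := by
    rintro x ⟨Γ, hΓ, hx⟩
    filter_upwards [Filter.eventually_ge_atTop (⟨Γ, hΓ⟩ : c)] with Δ hΔ using hΔ hx
  obtain ⟨Γ, d⟩ := (d.eventually hmem).exists
  exact ⟨Γ, Γ.2, n, d⟩

theorem exists_maximal_not_tab (h : ¬ Tab L cs pb cut R Γ) :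
    ∃ Δ, Γ ⊆ Δ ∧ Maximal (fun Δ => ¬ Tab L cs pb cut R Δ) Δ := by
  refine zorn_subset_nonempty {Δ | ¬ Tab L cs pb cut R Δ} (fun c hc hchain hne => ?_) Γ h
  refine ⟨⋃₀ c, fun htab => ?_, fun _ => Set.subset_sUnion_of_mem⟩
  obtain ⟨Δ, hΔ, htab⟩ := htab.exists_mem_of_sUnion hne hchain.directedOn
  exact hc hΔ htab

theorem mem_of_maximal_not_tab (hΔ : Maximal (fun Δ => ¬ Tab L cs pb cut R Δ) Δ) {x : Node}
    (rule : ∀ {n}, TabN L cs pb cut R (insert x Δ) n → TabN L cs pb cut R Δ (n + 1)) : x ∈ Δ :=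
  hΔ.mem_of_prop_insert fun ⟨_, d⟩ => hΔ.prop ⟨_, rule d⟩

theorem mem_or_mem_of_maximal_not_tab (hΔ : Maximal (fun Δ => ¬ Tab L cs pb cut R Δ) Δ)
    {x y : Node} (rule : ∀ {m n}, TabN L cs pb cut R (insert x Δ) m →
      TabN L cs pb cut R (insert y Δ) n → TabN L cs pb cut R Δ (m + n + 1)) :
    x ∈ Δ ∨ y ∈ Δ := by
  refine or_iff_not_imp_left.2 fun hx => hΔ.mem_of_prop_insert fun ⟨_, dy⟩ => ?_
  obtain ⟨_, dx⟩ := not_not.1 (mt hΔ.mem_of_prop_insert hx)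
  exact hΔ.prop ⟨_, rule dx dy⟩

end MaximalOpenBranches

section HintikkaSets

/-- Hintikka sets for J relative to the root set `R`: branches that satisfy none of the closure
conditions and are saturated under the rules of J^e_CS. -/
structure IsHintikka (cs : ConstSpec L) (R : Set Fml) (Δ : Set Node) : Prop where
  bot : Node.fml .bot ∉ Δ
  fml_neg {A} : Node.fml A ∈ Δ → Node.fml (.neg A) ∉ Δ
  pos_neg {t A} : Node.pos t A ∈ Δ → Node.neg t A ∉ Δ
  constSpec {c F} : Fml.box (.const c) F ∈ cs.set → Node.fml (.neg (.box (.const c) F)) ∉ Δ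
  neg_neg {A} : Node.fml (.neg (.neg A)) ∈ Δ → Node.fml A ∈ Δ
  neg_imp_left {A B} : Node.fml (.neg (.imp A B)) ∈ Δ → Node.fml A ∈ Δ
  neg_imp_right {A B} : Node.fml (.neg (.imp A B)) ∈ Δ → Node.fml (.neg B) ∈ Δ
  imp {A B} : Node.fml (.imp A B) ∈ Δ → Node.fml (.neg A) ∈ Δ ∨ Node.fml B ∈ Δ
  box {t A} : Node.fml (.box t A) ∈ Δ → Node.pos t A ∈ Δ
  neg_box {t A} : Node.fml (.neg (.box t A)) ∈ Δ → Node.neg t A ∈ Δ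
  neg_sum_left {s t A} : Node.neg (.sum s t) A ∈ Δ → Node.neg s A ∈ Δ
  neg_sum_right {s t A} : Node.neg (.sum s t) A ∈ Δ → Node.neg t A ∈ Δ
  app {s t A B} : Node.pos s (.imp A B) ∈ Δ → Node.pos t A ∈ Δ → CSSub cs R (.imp A B) →
    OccRoot R (.app s t) → Node.pos (.app s t) B ∈ Δ
  fml_or_neg {A} : CSSub cs R A → Node.fml A ∈ Δ ∨ Node.fml (.neg A) ∈ Δ
  pos_or_neg {t A} : CSSub cs R A → OccRoot R t → Node.pos t A ∈ Δ ∨ Node.neg t A ∈ Δ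

theorem isHintikka_of_maximal_not_tab (hΔ : Maximal (fun Δ => ¬ Tab L cs true cut R Δ) Δ) :
    IsHintikka cs R Δ where
  bot h := hΔ.prop ⟨_, .closeBot h⟩
  fml_neg h h' := hΔ.prop ⟨_, .closeF h h'⟩
  pos_neg h h' := hΔ.prop ⟨_, .closeE h h'⟩
  constSpec hF h := hΔ.prop ⟨_, .closeCS hF h⟩
  neg_neg h := mem_of_maximal_not_tab hΔ (.fNeg h)
  neg_imp_left h := mem_of_maximal_not_tab hΔ fun d =>
    .fImp h (d.mono (Set.insert_subset_insert (Set.subset_insert _ _)))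
  neg_imp_right h := mem_of_maximal_not_tab hΔ fun d => .fImp h (d.mono (Set.subset_insert _ _))
  imp h := mem_or_mem_of_maximal_not_tab hΔ (.tImp h)
  box h := mem_of_maximal_not_tab hΔ (.te h)
  neg_box h := mem_of_maximal_not_tab hΔ (.fe h)
  neg_sum_left h := mem_of_maximal_not_tab hΔ (.plusL h)
  neg_sum_right h := mem_of_maximal_not_tab hΔ (.plusR h)
  app hs ht hAB hst := mem_of_maximal_not_tab hΔ (.appR hs ht hAB hst)
  fml_or_neg hA := mem_or_mem_of_maximal_not_tab hΔ (.rulePB rfl hA)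
  pos_or_neg hA ht := mem_or_mem_of_maximal_not_tab hΔ (.rulePBe rfl hA ht)

end HintikkaSets

section Subexpressions

theorem Subf.trans {A B C : Fml} (hAB : Subf A B) (hBC : Subf B C) : Subf A C := by
  induction hBC with
  | refl => exact hAB
  | neg _ ih => exact .neg ih
  | impL _ ih => exact .impL ih
  | impR _ ih => exact .impR ih
  | box _ ih => exact .box ih

theorem CSSub.of_subf {A B : Fml} (hB : CSSub cs R B) (hAB : Subf A B) : CSSub cs R A :=
  hB.imp (fun ⟨C, hC, hBC⟩ => ⟨C, hC, hAB.trans hBC⟩) fun ⟨F, hF, hBF⟩ => ⟨F, hF, hAB.trans hBF⟩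

theorem SubTm.trans {s t u : Term} (hst : SubTm s t) (htu : SubTm t u) : SubTm s u := by
  induction htu with
  | refl => exact hst
  | appL _ ih => exact .appL ih
  | appR _ ih => exact .appR ih
  | sumL _ ih => exact .sumL ih
  | sumR _ ih => exact .sumR ih
  | bang _ ih => exact .bang ih
  | quest _ ih => exact .quest ih
  | qbar _ ih => exact .qbar ih

theorem OccT.of_subTm {s t : Term} {A : Fml} (h : OccT t A) (hst : SubTm s t) : OccT s A := by
  induction h with
  | neg _ ih => exact .neg ih
  | impL _ ih => exact .impL ih
  | impR _ ih => exact .impR ih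
  | boxT h => exact .boxT (hst.trans h)
  | boxF _ ih => exact .boxF ih

theorem OccT.of_subf {t : Term} {A B : Fml} (h : OccT t A) (hAB : Subf A B) : OccT t B := by
  induction hAB with
  | refl => exact h
  | neg _ ih => exact .neg ih
  | impL _ ih => exact .impL ih
  | impR _ ih => exact .impR ih
  | box _ ih => exact .boxF ih

theorem OccRoot.of_subTm {s t : Term} (h : OccRoot R t) (hst : SubTm s t) : OccRoot R s :=
  let ⟨B, hB, htB⟩ := h
  ⟨B, hB, htB.of_subTm hst⟩

end Subexpressions

section BranchModel

/-- The evidence relation generated from the positive evidential formulas of `Δ` by the closure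
conditions (E1)–(E3). Only CS-subformulas of `R` are taken from `Δ`, so that `[s·t, B]` can be
obtained by the rule (·) from evidence for `s` and `t`. -/
inductive Evid (cs : ConstSpec L) (R : Set Fml) (Δ : Set Node) : Term → Fml → Prop
  | pos {t A} : Node.pos t A ∈ Δ → CSSub cs R A → Evid cs R Δ t A
  | const {c F} : Fml.box (.const c) F ∈ cs.set → Evid cs R Δ (.const c) F
  | app {s t A B} : Evid cs R Δ s (.imp A B) → Evid cs R Δ t A → Evid cs R Δ (.app s t) B
  | sumL {s t A} : Evid cs R Δ s A → Evid cs R Δ (.sum s t) A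
  | sumR {s t A} : Evid cs R Δ t A → Evid cs R Δ (.sum s t) A

/-- The canonical M-model of the branch `Δ`: evidence is given by `Evid`, and a propositional
variable is true when it lies on the branch. -/
def branchModel (cs : ConstSpec L) (R : Set Fml) (Δ : Set Node) : MModel where
  ev t := {A | Evid cs R Δ t A}
  val n := Node.fml (.prop n) ∈ Δ

theorem branchModel_isModel (cs : ConstSpec Logic.J) (R : Set Fml) (Δ : Set Node) :
    IsModel Logic.J cs (branchModel cs R Δ) where
  e1 _ _ _ _ := .app
  e2l _ _ _ := .sumL
  e2r _ _ _ := .sumR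
  e3 _ _ := .const
  e4 := nofun
  e5 := nofun
  e6 := nofun
  e7 := nofun
  e8 := nofun

theorem Evid.cssub {t : Term} {A : Fml} (h : Evid cs R Δ t A) : CSSub cs R A := by
  induction h with
  | pos _ hA => exact hA
  | const hF => exact .inr ⟨_, hF, .box (.refl _)⟩
  | app _ _ ih _ => exact ih.of_subf (.impR (.refl _))
  | sumL _ ih => exact ih
  | sumR _ ih => exact ih

theorem IsHintikka.pos_const_mem (hΔ : IsHintikka cs R Δ) {c : ℕ} {F : Fml}
    (hF : Fml.box (.const c) F ∈ cs.set) : Node.pos (.const c) F ∈ Δ :=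
  hΔ.box ((hΔ.fml_or_neg (.inr ⟨_, hF, .refl _⟩)).resolve_right (hΔ.constSpec hF))

theorem IsHintikka.pos_mem_of_evid (hΔ : IsHintikka cs R Δ) {t : Term} {A : Fml}
    (h : Evid cs R Δ t A) (ht : OccRoot R t) : Node.pos t A ∈ Δ := by
  induction h with
  | pos hA _ => exact hA
  | const hF => exact hΔ.pos_const_mem hF
  | app hs _ ihs iht =>
    exact hΔ.app (ihs (ht.of_subTm (.appL (.refl _)))) (iht (ht.of_subTm (.appR (.refl _))))
      hs.cssub ht
  | sumL hs ih =>
    exact (hΔ.pos_or_neg hs.cssub ht).resolve_right fun hn =>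
      hΔ.pos_neg (ih (ht.of_subTm (.sumL (.refl _)))) (hΔ.neg_sum_left hn)
  | sumR hs ih =>
    exact (hΔ.pos_or_neg hs.cssub ht).resolve_right fun hn =>
      hΔ.pos_neg (ih (ht.of_subTm (.sumR (.refl _)))) (hΔ.neg_sum_right hn)

theorem IsHintikka.branchModel_sat (hΔ : IsHintikka cs R Δ) {A B : Fml} (hB : B ∈ R)
    (hAB : Subf A B) :
    (Node.fml A ∈ Δ → (branchModel cs R Δ).sat A) ∧
      (Node.fml (.neg A) ∈ Δ → ¬ (branchModel cs R Δ).sat A) := by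
  induction A with
  | prop n => exact ⟨id, fun hn hp => hΔ.fml_neg hp hn⟩
  | bot => exact ⟨hΔ.bot, fun _ => id⟩
  | neg A ih =>
    have ⟨ihT, ihF⟩ := ih (.trans (.neg (.refl _)) hAB)
    exact ⟨ihF, fun hn hA => hA (ihT (hΔ.neg_neg hn))⟩
  | imp A C ihA ihC =>
    have ⟨ihAT, ihAF⟩ := ihA (.trans (.impL (.refl _)) hAB)
    have ⟨ihCT, ihCF⟩ := ihC (.trans (.impR (.refl _)) hAB)
    constructor
    · intro hAC hA
      exact ihCT ((hΔ.imp hAC).resolve_left fun hnA => ihAF hnA hA)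
    · intro hn hAC
      exact ihCF (hΔ.neg_imp_right hn) (hAC (ihAT (hΔ.neg_imp_left hn)))
  | box t A _ =>
    have hA : CSSub cs R A := .inl ⟨B, hB, .trans (.box (.refl _)) hAB⟩
    have ht : OccRoot R t := ⟨B, hB, .of_subf (.boxT (.refl _)) hAB⟩
    exact ⟨fun h => .pos (hΔ.box h) hA,
      fun hn he => hΔ.pos_neg (hΔ.pos_mem_of_evid he ht) (hΔ.neg_box hn)⟩

end BranchModel

theorem exists_isModel_of_not_tab {cs : ConstSpec Logic.J}
    (h : ¬ Tab Logic.J cs true cut R (Node.fml '' R)) :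
    ∃ M, IsModel Logic.J cs M ∧ ∀ A ∈ R, M.sat A := by
  obtain ⟨Δ, hR, hmax⟩ := exists_maximal_not_tab h
  refine ⟨branchModel cs R Δ, branchModel_isModel cs R Δ, fun A hA => ?_⟩
  exact ((isHintikka_of_maximal_not_tab hmax).branchModel_sat hA (.refl A)).1 (hR ⟨A, hA, rfl⟩)

theorem J_cut_elimination_general (cs : ConstSpec Logic.J) (R : Set Fml)
    (h : Tab Logic.J cs true true R (Node.fml '' R)) :
    Tab Logic.J cs true false R (Node.fml '' R) := by
  by_contra hopen
  obtain ⟨n, d⟩ := h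
  obtain ⟨M, hM, hR⟩ := exists_isModel_of_not_tab hopen
  exact d.not_branchSat hM (Set.forall_mem_image.2 hR)

end JLTab

/-- Cut elimination for J: if a J-formula is provable in
J^e_CS + (cut), then it is provable in J^e_CS. -/
theorem JLTab.J_cut_elimination (cs : ConstSpec Logic.J) (A : Fml)
    (hA : FmlInLang Logic.J A)
    (h : TabProof Logic.J cs true true A) :
    TabProof Logic.J cs true false A := by
  simpa only [TabProof, Set.image_singleton] using
    J_cut_elimination_general cs {.neg A} (by simpa only [TabProof, Set.image_singleton] using h)
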